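/- The affine energy is dominated by the standard one: for any nonzero smooth compactly supported f on ℝⁿ and p > 1, if equality holds in the key inequality vol(K_f)^{-p/n} ∫ C_f*(∇f) dx = a₂ Z_p(f)^p, then L_f is a 0-symmetric ellipsoid (using the equality case of the L_p Busemann-Petty centroid inequality: equality holds iff the body is a 0-symmetric ellipsoid). -/

import Mathlib

open MeasureTheory Real
open scoped RealInnerProductSpace Pointwise

noncomputable section

/-- `ω_s = π^(s/2) / Γ(s/2 + 1)`. -/
def omegaR (s : ℝ) : ℝ := Real.pi ^ (s / 2) / Real.Gamma (s / 2 + 1)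

/-- `a₁ = ω_{n+p} / (ω₂ ω_n ω_{p-1})`. -/
def aOne (n : ℕ) (p : ℝ) : ℝ := omegaR (n + p) / (omegaR 2 * omegaR n * omegaR (p - 1))

/-- The `L^p` norm of the directional derivative `∇_ξ f = ⟨∇f, ξ⟩`. -/
def dirDerivLpNorm (n : ℕ) (p : ℝ) (f : EuclideanSpace ℝ (Fin n) → ℝ)
    (ξ : EuclideanSpace ℝ (Fin n)) : ℝ :=
  (∫ y, |⟪gradient f y, ξ⟫| ^ p) ^ (1 / p)

/-- `C_f*(x) = ∫_{S^{n-1}} ‖∇_ξ f‖_p^{-(n+p)} |⟨x, ξ⟩|^p dξ`. -/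
def Cfstar (n : ℕ) (p : ℝ) (f : EuclideanSpace ℝ (Fin n) → ℝ)
    (x : EuclideanSpace ℝ (Fin n)) : ℝ :=
  ∫ ξ : Metric.sphere (0 : EuclideanSpace ℝ (Fin n)) 1,
    dirDerivLpNorm n p f ξ ^ (-(n + p : ℝ)) * |⟪x, (ξ : EuclideanSpace ℝ (Fin n))⟫| ^ p
      ∂(volume : Measure (EuclideanSpace ℝ (Fin n))).toSphere

/-- The Legendre transform. -/
def legendre {n : ℕ} (C : EuclideanSpace ℝ (Fin n) → ℝ) (x : EuclideanSpace ℝ (Fin n)) : ℝ :=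
  ⨆ y : EuclideanSpace ℝ (Fin n), (⟪x, y⟫ - C y)

/-- The `L_p`-centroid body `Γ_p L`, described through its support function
`h_{Γ_p L}(v) = ((1/(a₁ vol(L))) ∫_L |⟨v, x⟩|^p dx)^{1/p}`. -/
def centroidBody (n : ℕ) (p : ℝ) (L : Set (EuclideanSpace ℝ (Fin n))) :
    Set (EuclideanSpace ℝ (Fin n)) :=
  {x | ∀ v : EuclideanSpace ℝ (Fin n),
    ⟪x, v⟫ ≤ ((aOne n p * (volume L).toReal)⁻¹ * ∫ y in L, |⟪v, y⟫| ^ p) ^ (1 / p)}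


/-- `Z_p(f) = (∫_{S^{n-1}} ‖∇_ξ f‖_p^{-n} dξ)^{-1/n}`. -/
def Zp (n : ℕ) (p : ℝ) (f : EuclideanSpace ℝ (Fin n) → ℝ) : ℝ :=
  (∫ ξ : Metric.sphere (0 : EuclideanSpace ℝ (Fin n)) 1,
      dirDerivLpNorm n p f ξ ^ (-(n : ℝ))
        ∂(volume : Measure (EuclideanSpace ℝ (Fin n))).toSphere) ^ (-(1 / (n : ℝ)))

/-!
Let `L_f` be the unit ball of the norm `ξ ↦ ‖∇_ξ f‖_p`. In polar coordinates `C_f*` becomes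
`n + p` times the `p`-th absolute moment `v ↦ ∫_{L_f} |⟨v, y⟩|^p dy`, i.e. a multiple of the `p`-th
power of the support function of `Γ_p L_f`. The Legendre transform of `c N^p` is at most `1` exactly
on a dilate of the dual unit ball of `N`, so `K_f` is an explicit dilate of `Γ_p L_f`. By Fubini,
`∫ C_f*(∇f) = ∫_{S^{n-1}} ‖∇_ξ f‖_p^{-n} dξ = n vol(L_f)`, and the last integral also determines
`Z_p(f)`. All constants cancel: equality in the key inequality says `vol(Γ_p L_f) = vol(L_f)`, the
equality case of the Busemann-Petty centroid inequality for `L_f`.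
-/

section FiniteDimensionalNorm

variable {E : Type*} [NormedAddCommGroup E] [NormedSpace ℝ E] [FiniteDimensional ℝ E]
  {N : Seminorm ℝ E}

theorem continuous_seminorm_of_finiteDimensional (N : Seminorm ℝ E) : Continuous N :=
  continuousOn_univ.1 (N.convexOn.continuousOn isOpen_univ)

theorem exists_norm_le_mul_seminorm (hN : ∀ x, N x = 0 → x = 0) :
    ∃ K, 0 ≤ K ∧ ∀ x, ‖x‖ ≤ K * N x := by
  obtain ⟨m, hm, hmin⟩ := (isCompact_sphere (0 : E) 1).exists_forall_le'
    (continuous_seminorm_of_finiteDimensional N).continuousOn (a := 0) fun x hx =>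
      (apply_nonneg N x).lt_of_ne' fun h => ne_zero_of_mem_unit_sphere ⟨x, hx⟩ (hN x h)
  refine ⟨m⁻¹, by positivity, fun x => ?_⟩
  rcases eq_or_ne x 0 with rfl | hx
  · simp
  · have hx' : m ≤ ‖x‖⁻¹ * N x := by
      simpa [map_smul_eq_mul] using hmin (‖x‖⁻¹ • x) (by simp [norm_smul, hx])
    rwa [le_inv_mul_iff₀ (norm_pos_iff.2 hx), mul_comm, ← le_inv_mul_iff₀ hm] at hx'

theorem isCompact_seminorm_le_one (hN : ∀ x, N x = 0 → x = 0) : IsCompact {x | N x ≤ 1} := by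
  obtain ⟨K, hK0, hK⟩ := exists_norm_le_mul_seminorm hN
  refine Metric.isCompact_of_isClosed_isBounded
    (isClosed_le (continuous_seminorm_of_finiteDimensional N) continuous_const)
    ((Metric.isBounded_closedBall (x := (0 : E)) (r := K)).subset fun x (hx : N x ≤ 1) => ?_)
  exact mem_closedBall_zero_iff.2 ((hK x).trans (mul_le_of_le_one_right hK0 hx))

theorem seminorm_le_one_mem_nhds_zero (N : Seminorm ℝ E) : {x | N x ≤ 1} ∈ nhds 0 :=
  (continuous_seminorm_of_finiteDimensional N).continuousAt.eventually_le_const (by simp)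

end FiniteDimensionalNorm

section PolarCoordinates

variable {E : Type*}

theorem mul_integral_Ioi_pow_mul_indicator_sublevel [AddCommGroup E] [Module ℝ E] {N g : E → ℝ}
    {d : ℕ} (hd : d ≠ 0) {s : ℝ} (hs : 0 < d + s) (hN : ∀ r x, 0 < r → N (r • x) = r * N x)
    (hg : ∀ (r : ℝ) x, 0 < r → g (r • x) = r ^ s * g x) {ξ : E} (hξ : 0 < N ξ) :
    (d + s) * ∫ r in Set.Ioi (0 : ℝ), r ^ (d - 1) * {x | N x ≤ 1}.indicator g (r • ξ) =
      N ξ ^ (-(d + s)) * g ξ := by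
  have hray : Set.EqOn (fun r : ℝ => r ^ (d - 1) * {x | N x ≤ 1}.indicator g (r • ξ))
      ((Set.Iic (N ξ)⁻¹).indicator fun r => r ^ (d + s - 1) * g ξ) (Set.Ioi 0) := by
    intro r (hr : 0 < r)
    have hmem : r • ξ ∈ {x | N x ≤ 1} ↔ r ∈ Set.Iic (N ξ)⁻¹ := by
      rw [Set.mem_ofPred_eq, hN r ξ hr, Set.mem_Iic, ← one_div, le_div_iff₀ hξ]
    have hpow : r ^ (d - 1) * r ^ s = r ^ (d + s - 1) := by
      rw [← Real.rpow_natCast, ← Real.rpow_add hr, Nat.cast_pred (Nat.pos_of_ne_zero hd),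
        sub_add_eq_add_sub]
    by_cases h : r ∈ Set.Iic (N ξ)⁻¹
    · simp only [Set.indicator_of_mem h, Set.indicator_of_mem (hmem.2 h), hg r ξ hr, ← mul_assoc,
        hpow]
    · simp only [Set.indicator_of_notMem h, Set.indicator_of_notMem (mt hmem.1 h), mul_zero]
  rw [setIntegral_congr_fun measurableSet_Ioi hray, setIntegral_indicator measurableSet_Iic,
    Set.Ioi_inter_Iic, ← intervalIntegral.integral_of_le (inv_nonneg.2 hξ.le),
    intervalIntegral.integral_mul_const, integral_rpow (Or.inl (by linarith)), sub_add_cancel,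
    Real.zero_rpow hs.ne', sub_zero, Real.inv_rpow hξ.le, ← Real.rpow_neg hξ.le, ← mul_assoc,
    mul_div_cancel₀ _ hs.ne']

variable [NormedAddCommGroup E] [NormedSpace ℝ E] [FiniteDimensional ℝ E] [Nontrivial E]
  [MeasurableSpace E] [BorelSpace E] {μ : Measure E} [μ.IsAddHaarMeasure]

theorem integral_eq_integral_toSphere_integral_Ioi {F : Type*} [NormedAddCommGroup F]
    [NormedSpace ℝ F] {h : E → F} (hh : Integrable h μ) :
    ∫ x, h x ∂μ = ∫ ξ : Metric.sphere (0 : E) 1,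
      (∫ r in Set.Ioi (0 : ℝ), r ^ (Module.finrank ℝ E - 1) • h (r • (ξ : E))) ∂μ.toSphere := by
  set d := Module.finrank ℝ E
  have hpolar := μ.measurePreserving_homeomorphUnitSphereProd
  have hemb := (homeomorphUnitSphereProd E).measurableEmbedding
  let H : Metric.sphere (0 : E) 1 × Set.Ioi (0 : ℝ) → F := fun z => h ((z.2 : ℝ) • (z.1 : E))
  have hH : H ∘ homeomorphUnitSphereProd E = fun x : ({0}ᶜ : Set E) => h x := by
    funext x
    have hx : ‖(x : E)‖ ≠ 0 := norm_ne_zero_iff.2 x.2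
    simp [H, smul_smul, hx]
  have hHi : Integrable H (μ.toSphere.prod (.volumeIoiPow (d - 1))) := by
    rw [← hpolar.integrable_comp_emb hemb, hH]
    exact (integrableOn_iff_comap_subtypeVal (measurableSet_singleton _).compl).1 hh.integrableOn
  calc ∫ x, h x ∂μ = ∫ x : ({0}ᶜ : Set E), h x ∂μ.comap (↑) := by
        rw [integral_subtype_comap (measurableSet_singleton _).compl h, restrict_compl_singleton]
    _ = ∫ z, H z ∂μ.toSphere.prod (.volumeIoiPow (d - 1)) := by
        rw [← hpolar.integral_comp hemb]
        exact congrArg (fun k => ∫ x : ({0}ᶜ : Set E), k x ∂μ.comap (↑)) hH.symm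
    _ = ∫ ξ, ∫ r, H (ξ, r) ∂.volumeIoiPow (d - 1) ∂μ.toSphere := integral_prod _ hHi
    _ = _ := by
        refine integral_congr_ae (.of_forall fun ξ => ?_)
        simp only [H, Measure.volumeIoiPow, ENNReal.ofReal]
        rw [integral_withDensity_eq_integral_smul
          (measurable_subtype_coe.pow_const _).real_toNNReal,
          integral_subtype_comap measurableSet_Ioi fun r =>
            Real.toNNReal (r ^ (d - 1)) • h (r • (ξ : E))]
        refine setIntegral_congr_fun measurableSet_Ioi fun r hr => ?_
        simp only [NNReal.smul_def, Real.coe_toNNReal _ (pow_nonneg (le_of_lt hr) _)]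

theorem mul_setIntegral_sublevel_eq_integral_toSphere {N g : E → ℝ} {s : ℝ}
    (hs : 0 < Module.finrank ℝ E + s) (hN : ∀ r x, 0 < r → N (r • x) = r * N x)
    (hN_pos : ∀ x ∈ Metric.sphere (0 : E) 1, 0 < N x)
    (hg : ∀ (r : ℝ) x, 0 < r → g (r • x) = r ^ s * g x)
    (hmeas : MeasurableSet {x | N x ≤ 1}) (hint : IntegrableOn g {x | N x ≤ 1} μ) :
    (Module.finrank ℝ E + s) * ∫ x in {x | N x ≤ 1}, g x ∂μ =
      ∫ ξ : Metric.sphere (0 : E) 1, N ξ ^ (-(Module.finrank ℝ E + s)) * g ξ ∂μ.toSphere := by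
  rw [← integral_indicator hmeas,
    integral_eq_integral_toSphere_integral_Ioi (hint.integrable_indicator hmeas),
    ← integral_const_mul]
  exact integral_congr_ae (.of_forall fun ξ => mul_integral_Ioi_pow_mul_indicator_sublevel
    Module.finrank_pos.ne' hs hN hg (hN_pos ξ ξ.2))

theorem toReal_measure_smul_rpow {r : ℝ} (hr : 0 < r) (S : Set E) (p : ℝ) :
    (μ (r • S)).toReal ^ (-(p / Module.finrank ℝ E)) =
      r ^ (-p) * (μ S).toReal ^ (-(p / Module.finrank ℝ E)) := by
  have hd : (Module.finrank ℝ E : ℝ) ≠ 0 := Nat.cast_ne_zero.2 Module.finrank_pos.ne'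
  rw [Measure.addHaar_smul_of_nonneg μ hr.le, ENNReal.toReal_mul,
    ENNReal.toReal_ofReal (by positivity), Real.mul_rpow (by positivity) ENNReal.toReal_nonneg,
    ← Real.rpow_natCast, ← Real.rpow_mul hr.le, mul_neg, mul_div_cancel₀ _ hd]

end PolarCoordinates

section LegendreTransform

variable {p q c : ℝ}

theorem mul_sub_mul_rpow_le (hpq : p.HolderConjugate q) (hc : 0 < c) {x b : ℝ} (hx : 0 ≤ x)
    (hb : 0 ≤ b) : x * b - c * b ^ p ≤ (x / (p * c) ^ (1 / p)) ^ q / q := by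
  have hp := hpq.pos
  have hk : 0 < (p * c) ^ (1 / p) := by positivity
  have hpow : ((p * c) ^ (1 / p) * b) ^ p / p = c * b ^ p := by
    rw [Real.mul_rpow hk.le hb, ← Real.rpow_mul (by positivity), one_div_mul_cancel hp.ne',
      Real.rpow_one, mul_assoc, mul_div_cancel_left₀ _ hp.ne']
  have hyoung := Real.young_inequality_of_nonneg (mul_nonneg hk.le hb) (div_nonneg hx hk.le) hpq
  rw [hpow, mul_right_comm, mul_div_cancel₀ _ hk.ne'] at hyoung
  linarith

theorem le_mul_of_forall_mul_sub_mul_rpow_le_one (hpq : p.HolderConjugate q) (hc : 0 < c)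
    {a b : ℝ} (hb : 0 < b) (h : ∀ t > 0, t * a - c * (t * b) ^ p ≤ 1) :
    a ≤ q ^ (1 / q) * (p * c) ^ (1 / p) * b := by
  have hp := hpq.pos
  have hq := hpq.symm.pos
  -- The supremum over `t` is attained where `c * (t * b) ^ p = q / p`.
  set s : ℝ := (q / (p * c)) ^ (1 / p) with hs
  have hs_pos : 0 < s := by positivity
  have hs_pow : c * s ^ p = q - 1 := by
    rw [hs, ← Real.rpow_mul (by positivity), one_div_mul_cancel hp.ne', Real.rpow_one]
    have := hpq.mul_eq_add
    field_simp
    linarith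
  have hs_mul : q ^ (1 / q) * (p * c) ^ (1 / p) * s = q := by
    rw [hs, mul_assoc, ← Real.mul_rpow (by positivity) (by positivity),
      mul_div_cancel₀ _ (by positivity), ← Real.rpow_add hq, one_div, one_div, add_comm,
      hpq.inv_add_inv_eq_one, Real.rpow_one]
  have hopt : s / b * a ≤ q := by
    have := h (s / b) (by positivity)
    rw [div_mul_cancel₀ _ hb.ne', hs_pow] at this
    linarith
  rw [div_mul_eq_mul_div, div_le_iff₀ hb] at hopt
  refine le_of_mul_le_mul_left ?_ hs_pos
  calc s * a ≤ q * b := hopt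
    _ = s * (q ^ (1 / q) * (p * c) ^ (1 / p) * b) := by linear_combination -b * hs_mul

theorem legendre_mul_rpow_le_one_iff {n : ℕ} (hpq : p.HolderConjugate q) (hc : 0 < c)
    {N : Seminorm ℝ (EuclideanSpace ℝ (Fin n))} (hN : ∀ v, N v = 0 → v = 0)
    (x : EuclideanSpace ℝ (Fin n)) :
    legendre (fun v => c * N v ^ p) x ≤ 1 ↔
      ∀ v, ⟪x, v⟫ ≤ q ^ (1 / q) * (p * c) ^ (1 / p) * N v := by
  have hp := hpq.pos
  have hq := hpq.symm.pos
  obtain ⟨K, hK0, hK⟩ := exists_norm_le_mul_seminorm hN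
  have hbdd : BddAbove (Set.range fun v => ⟪x, v⟫ - c * N v ^ p) := by
    refine ⟨((‖x‖ * K) / (p * c) ^ (1 / p)) ^ q / q, Set.forall_mem_range.2 fun v => ?_⟩
    calc ⟪x, v⟫ - c * N v ^ p ≤ ‖x‖ * (K * N v) - c * N v ^ p := by
          gcongr
          exact (real_inner_le_norm x v).trans (by gcongr; exact hK v)
      _ ≤ _ := by
          rw [← mul_assoc]
          exact mul_sub_mul_rpow_le hpq hc (by positivity) (apply_nonneg N v)
  rw [legendre, ciSup_le_iff hbdd]
  refine ⟨fun h v => ?_, fun h v => ?_⟩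
  · rcases (apply_nonneg N v).eq_or_lt' with hv | hv
    · simp [hN v hv]
    · refine le_mul_of_forall_mul_sub_mul_rpow_le_one hpq hc hv fun t ht => ?_
      simpa [real_inner_smul_right, map_smul_eq_mul, abs_of_pos ht] using h (t • v)
  · calc ⟪x, v⟫ - c * N v ^ p ≤ q ^ (1 / q) * (p * c) ^ (1 / p) * N v - c * N v ^ p := by
          gcongr
          exact h v
      _ ≤ (q ^ (1 / q) * (p * c) ^ (1 / p) / (p * c) ^ (1 / p)) ^ q / q :=
          mul_sub_mul_rpow_le hpq hc (by positivity) (apply_nonneg N v)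
      _ = 1 := by
          rw [mul_div_cancel_right₀ _ (by positivity), ← Real.rpow_mul hq.le,
            one_div_mul_cancel hq.ne', Real.rpow_one, div_self hq.ne']

end LegendreTransform

section LpInnerSeminorm

variable {E α : Type*} [NormedAddCommGroup E] [InnerProductSpace ℝ E] [MeasurableSpace α]
  {μ : Measure α} {G : α → E}

/-- The seminorm `ξ ↦ ‖⟪G ·, ξ⟫‖_{L^p(μ)}` of a vector-valued `L^p` function `G`. For `G = ∇f` it is
`ξ ↦ ‖∇_ξ f‖_p`; for `G` the identity of a body it is the support function of the `L_p`-centroid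
body, up to normalization. -/
def lpInnerSeminorm {p : ENNReal} (hp : 1 ≤ p) (hG : MemLp G p μ) : Seminorm ℝ E :=
  Seminorm.of (fun ξ => lpNorm (fun y => ⟪G y, ξ⟫) p μ)
    (fun ξ η => by
      simp only [inner_add_right]
      exact lpNorm_add_le (hG.inner_const ξ) hp)
    (fun r ξ => by
      simp only [real_inner_smul_right]
      exact lpNorm_const_smul r (fun y => ⟪G y, ξ⟫) μ)

theorem lpInnerSeminorm_eq_zero_iff {p : ENNReal} (hp : 1 ≤ p) (hG : MemLp G p μ) (ξ : E) :
    lpInnerSeminorm hp hG ξ = 0 ↔ ∀ᵐ y ∂μ, ⟪G y, ξ⟫ = 0 :=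
  lpNorm_eq_zero (hG.inner_const ξ) (one_pos.trans_le hp).ne'

theorem lpInnerSeminorm_ofReal_apply {p : ℝ} (hp : 1 ≤ p) (hG : MemLp G (ENNReal.ofReal p) μ)
    (ξ : E) : lpInnerSeminorm (ENNReal.one_le_ofReal.2 hp) hG ξ =
      (∫ y, |⟪G y, ξ⟫| ^ p ∂μ) ^ (1 / p) := by
  have hp0 : 0 < p := by linarith
  have hmeas : AEStronglyMeasurable (fun y => ⟪G y, ξ⟫) μ :=
    (hG.inner_const ξ).aestronglyMeasurable
  have h := lpNorm_eq_integral_norm_rpow_toReal (ENNReal.ofReal_pos.2 hp0).ne'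
    ENNReal.ofReal_ne_top hmeas
  rwa [ENNReal.toReal_ofReal hp0.le, ← one_div] at h

theorem lpInnerSeminorm_ofReal_rpow {p : ℝ} (hp : 1 ≤ p) (hG : MemLp G (ENNReal.ofReal p) μ)
    (ξ : E) : lpInnerSeminorm (ENNReal.one_le_ofReal.2 hp) hG ξ ^ p =
      ∫ y, |⟪G y, ξ⟫| ^ p ∂μ := by
  rw [lpInnerSeminorm_ofReal_apply hp hG, one_div,
    Real.rpow_inv_rpow (integral_nonneg fun y => by positivity) (by linarith)]

end LpInnerSeminorm

section CentroidBody

variable {E : Type*} [NormedAddCommGroup E] [InnerProductSpace ℝ E] [FiniteDimensional ℝ E]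
  [MeasurableSpace E] [BorelSpace E] {μ : Measure E} {L : Set E}

theorem memLp_id_restrict_of_isCompact [IsFiniteMeasureOnCompacts μ] (hL : IsCompact L)
    (p : ENNReal) : MemLp (fun y : E => y) p (μ.restrict L) := by
  have : IsFiniteMeasure (μ.restrict L) := isFiniteMeasure_restrict.2 hL.measure_lt_top.ne
  obtain ⟨R, hR⟩ := hL.isBounded.subset_closedBall (0 : E)
  refine .of_bound aestronglyMeasurable_id R ?_
  filter_upwards [ae_restrict_mem hL.measurableSet] with y hy
  exact mem_closedBall_zero_iff.1 (hR hy)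

theorem eq_zero_of_ae_restrict_inner_eq_zero [μ.IsAddHaarMeasure] (hμL : μ L ≠ 0) {v : E}
    (hv : ∀ᵐ y ∂μ.restrict L, ⟪y, v⟫ = 0) : v = 0 := by
  by_contra hne
  have htop : (ℝ ∙ v)ᗮ ≠ ⊤ := by simpa using hne
  have hhyper : ∀ᵐ y ∂μ.restrict L, y ∉ (ℝ ∙ v)ᗮ :=
    ae_restrict_of_ae (measure_eq_zero_iff_ae_notMem.1 (μ.addHaar_submodule _ htop))
  refine hμL (Measure.restrict_eq_zero.1 (ae_eq_bot.1 (Filter.eventually_false_iff_eq_bot.1 ?_)))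
  filter_upwards [hv, hhyper] with y hy hy'
  exact hy' (Submodule.mem_orthogonal_singleton_iff_inner_left.2 hy)

theorem omegaR_pos {s : ℝ} (hs : 0 ≤ s) : 0 < omegaR s :=
  div_pos (Real.rpow_pos_of_pos Real.pi_pos _) (Real.Gamma_pos_of_pos (by linarith))

theorem aOne_pos (n : ℕ) {p : ℝ} (hp : 1 ≤ p) : 0 < aOne n p :=
  div_pos (omegaR_pos (by positivity)) (mul_pos (mul_pos (omegaR_pos zero_le_two)
    (omegaR_pos n.cast_nonneg)) (omegaR_pos (sub_nonneg.2 hp)))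

theorem legendre_sublevel_eq_smul_centroidBody {n : ℕ} {p q c : ℝ} (hpq : p.HolderConjugate q)
    (hc : 0 < c) {L : Set (EuclideanSpace ℝ (Fin n))} (hL : IsCompact L) (hvol : volume L ≠ 0) :
    {x | legendre (fun v => c * ∫ y in L, |⟪v, y⟫| ^ p) x ≤ 1} =
      (q ^ (1 / q) * (p * (c * (aOne n p * (volume L).toReal))) ^ (1 / p)) •
        centroidBody n p L := by
  have hp := hpq.pos
  have hq := hpq.symm.pos
  have hmem := memLp_id_restrict_of_isCompact (μ := volume) hL (ENNReal.ofReal p)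
  set N := lpInnerSeminorm (ENNReal.one_le_ofReal.2 hpq.lt.le) hmem
  have hN_rpow (v : EuclideanSpace ℝ (Fin n)) : ∫ y in L, |⟪v, y⟫| ^ p = N v ^ p := by
    rw [lpInnerSeminorm_ofReal_rpow hpq.lt.le hmem]
    simp only [real_inner_comm]
  have hN_zero (v : EuclideanSpace ℝ (Fin n)) (hv : N v = 0) : v = 0 :=
    eq_zero_of_ae_restrict_inner_eq_zero hvol ((lpInnerSeminorm_eq_zero_iff _ hmem v).1 hv)
  have hV : 0 < aOne n p * (volume L).toReal :=
    mul_pos (aOne_pos n hpq.lt.le) (ENNReal.toReal_pos hvol hL.measure_lt_top.ne)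
  set V := aOne n p * (volume L).toReal with hV_def
  set r := q ^ (1 / q) * (p * (c * V)) ^ (1 / p) with hr
  have hr_pos : 0 < r := by positivity
  have hscale : q ^ (1 / q) * (p * c) ^ (1 / p) = r * V⁻¹ ^ (1 / p) := by
    rw [hr, mul_assoc, ← Real.mul_rpow (by positivity) (by positivity), ← mul_assoc p,
      mul_inv_cancel_right₀ hV.ne']
  ext x
  simp only [Set.mem_smul_set_iff_inv_smul_mem₀ hr_pos.ne', Set.mem_ofPred_eq, hN_rpow,
    legendre_mul_rpow_le_one_iff hpq hc hN_zero, centroidBody, ← hV_def]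
  refine forall_congr' fun v => ?_
  have hroot : (N v ^ p) ^ (1 / p) = N v := by
    rw [one_div, Real.rpow_rpow_inv (apply_nonneg N v) hp.ne']
  rw [Real.mul_rpow (inv_nonneg.2 hV.le) (by positivity), hroot, real_inner_smul_left,
    inv_mul_le_iff₀ hr_pos, hscale, mul_assoc]

end CentroidBody

section Gradient

theorem eq_zero_of_hasCompactSupport_of_fderiv_apply_eq_zero {E F : Type*} [NormedAddCommGroup E]
    [NormedSpace ℝ E] [NormedAddCommGroup F] [NormedSpace ℝ F] {f : E → F}
    (hf : Differentiable ℝ f) (hsupp : HasCompactSupport f) {ξ : E} (hξ : ξ ≠ 0)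
    (h : ∀ x, fderiv ℝ f x ξ = 0) : f = 0 := by
  funext x
  have hderiv (t : ℝ) : HasDerivAt (fun t : ℝ => f (x + t • ξ)) 0 t := by
    have hline : HasDerivAt (fun t : ℝ => x + t • ξ) ξ t := by
      simpa using ((hasDerivAt_id t).smul_const ξ).const_add x
    have hcomp := (hf (x + t • ξ)).hasFDerivAt.comp_hasDerivAt t hline
    rwa [h] at hcomp
  have hline_closed : Topology.IsClosedEmbedding fun t : ℝ => x + t • ξ :=
    (Homeomorph.addLeft x).isClosedEmbedding.comp (isClosedEmbedding_smul_left hξ)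
  obtain ⟨t, ht⟩ := (hline_closed.tendsto_cocompact.eventually
    hsupp.isCompact.compl_mem_cocompact).exists
  calc f x = f (x + (0 : ℝ) • ξ) := by simp
    _ = f (x + t • ξ) := is_const_of_deriv_eq_zero (fun t => (hderiv t).differentiableAt)
        (fun t => (hderiv t).deriv) 0 t
    _ = 0 := image_eq_zero_of_notMem_tsupport ht

variable {E : Type*} [NormedAddCommGroup E] [InnerProductSpace ℝ E] [CompleteSpace E]
  {f : E → ℝ}

theorem continuous_gradient (hf : ContDiff ℝ 1 f) : Continuous (gradient f) :=
  (InnerProductSpace.toDual ℝ E).symm.continuous.comp (hf.continuous_fderiv one_ne_zero)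

theorem hasCompactSupport_gradient (hsupp : HasCompactSupport f) :
    HasCompactSupport (gradient f) :=
  (hsupp.fderiv (𝕜 := ℝ)).comp_left (g := (InnerProductSpace.toDual ℝ E).symm) (map_zero _)

variable [MeasurableSpace E] {μ : Measure E}

theorem memLp_gradient [OpensMeasurableSpace E] [IsFiniteMeasureOnCompacts μ] (hf : ContDiff ℝ 1 f)
    (hsupp : HasCompactSupport f) (p : ENNReal) : MemLp (gradient f) p μ :=
  (continuous_gradient hf).memLp_of_hasCompactSupport (hasCompactSupport_gradient hsupp)

theorem eq_zero_of_ae_inner_gradient_eq_zero [μ.IsOpenPosMeasure] (hf : ContDiff ℝ 1 f)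
    (hsupp : HasCompactSupport f) (hne : f ≠ 0) {ξ : E} (h : ∀ᵐ y ∂μ, ⟪gradient f y, ξ⟫ = 0) :
    ξ = 0 := by
  have hall : (fun y => ⟪gradient f y, ξ⟫) = fun _ => 0 :=
    (((continuous_gradient hf).inner continuous_const).ae_eq_iff_eq μ continuous_const).1 h
  by_contra hξ
  refine hne (eq_zero_of_hasCompactSupport_of_fderiv_apply_eq_zero
    (hf.differentiable one_ne_zero) hsupp hξ fun x => ?_)
  rw [← inner_gradient_left]
  exact congrFun hall x

end Gradient

section KeyInequality

variable {n : ℕ} {p q : ℝ} {f : EuclideanSpace ℝ (Fin n) → ℝ}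

/-- The body `L_f`, the unit ball of the norm `ξ ↦ ‖∇_ξ f‖_p`. -/
def dirDerivBody (n : ℕ) (p : ℝ) (f : EuclideanSpace ℝ (Fin n) → ℝ) :
    Set (EuclideanSpace ℝ (Fin n)) :=
  {ξ | dirDerivLpNorm n p f ξ ≤ 1}

/-- The body `K_f`, the unit sublevel set of `C_f`, the Legendre transform of `C_f*`. -/
def legendreBody (n : ℕ) (p : ℝ) (f : EuclideanSpace ℝ (Fin n) → ℝ) :
    Set (EuclideanSpace ℝ (Fin n)) :=
  {x | legendre (Cfstar n p f) x ≤ 1}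

/-- `ξ ↦ ‖∇_ξ f‖_p` bundled as a seminorm, for `f` continuously differentiable with compact
support. -/
def dirDerivSeminorm (hp : 1 ≤ p) (hf : ContDiff ℝ 1 f) (hsupp : HasCompactSupport f) :
    Seminorm ℝ (EuclideanSpace ℝ (Fin n)) :=
  lpInnerSeminorm (μ := volume) (ENNReal.one_le_ofReal.2 hp)
    (memLp_gradient hf hsupp (ENNReal.ofReal p))

theorem coe_dirDerivSeminorm (hp : 1 ≤ p) (hf : ContDiff ℝ 1 f) (hsupp : HasCompactSupport f) :
    ⇑(dirDerivSeminorm hp hf hsupp) = dirDerivLpNorm n p f :=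
  funext fun ξ => lpInnerSeminorm_ofReal_apply hp (memLp_gradient hf hsupp _) ξ

theorem eq_zero_of_dirDerivSeminorm_eq_zero (hp : 1 ≤ p) (hf : ContDiff ℝ 1 f)
    (hsupp : HasCompactSupport f) (hne : f ≠ 0) (ξ : EuclideanSpace ℝ (Fin n))
    (hξ : dirDerivSeminorm hp hf hsupp ξ = 0) : ξ = 0 :=
  eq_zero_of_ae_inner_gradient_eq_zero hf hsupp hne
    ((lpInnerSeminorm_eq_zero_iff _ (memLp_gradient hf hsupp _) ξ).1 hξ)

theorem continuous_dirDerivLpNorm (hp : 1 ≤ p) (hf : ContDiff ℝ 1 f)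
    (hsupp : HasCompactSupport f) : Continuous (dirDerivLpNorm n p f) :=
  coe_dirDerivSeminorm hp hf hsupp ▸ continuous_seminorm_of_finiteDimensional _

theorem dirDerivLpNorm_smul_of_pos (hp : 1 ≤ p) (hf : ContDiff ℝ 1 f)
    (hsupp : HasCompactSupport f) (r : ℝ) (ξ : EuclideanSpace ℝ (Fin n)) (hr : 0 < r) :
    dirDerivLpNorm n p f (r • ξ) = r * dirDerivLpNorm n p f ξ := by
  rw [← coe_dirDerivSeminorm hp hf hsupp, map_smul_eq_mul, Real.norm_of_nonneg hr.le]

theorem dirDerivLpNorm_pos (hp : 1 ≤ p) (hf : ContDiff ℝ 1 f) (hsupp : HasCompactSupport f)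
    (hne : f ≠ 0) {ξ : EuclideanSpace ℝ (Fin n)} (hξ : ξ ≠ 0) : 0 < dirDerivLpNorm n p f ξ := by
  rw [← coe_dirDerivSeminorm hp hf hsupp]
  exact (apply_nonneg _ ξ).lt_of_ne'
    (mt (eq_zero_of_dirDerivSeminorm_eq_zero hp hf hsupp hne ξ) hξ)

theorem isCompact_dirDerivBody (hp : 1 ≤ p) (hf : ContDiff ℝ 1 f) (hsupp : HasCompactSupport f)
    (hne : f ≠ 0) : IsCompact (dirDerivBody n p f) := by
  rw [dirDerivBody, ← coe_dirDerivSeminorm hp hf hsupp]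
  exact isCompact_seminorm_le_one (eq_zero_of_dirDerivSeminorm_eq_zero hp hf hsupp hne)

theorem convex_dirDerivBody (hp : 1 ≤ p) (hf : ContDiff ℝ 1 f) (hsupp : HasCompactSupport f) :
    Convex ℝ (dirDerivBody n p f) := by
  rw [dirDerivBody, ← coe_dirDerivSeminorm hp hf hsupp]
  simpa using (dirDerivSeminorm hp hf hsupp).convexOn.convex_le 1

theorem dirDerivBody_mem_nhds_zero (hp : 1 ≤ p) (hf : ContDiff ℝ 1 f)
    (hsupp : HasCompactSupport f) : dirDerivBody n p f ∈ nhds 0 := by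
  rw [dirDerivBody, ← coe_dirDerivSeminorm hp hf hsupp]
  exact seminorm_le_one_mem_nhds_zero _

theorem toReal_volume_dirDerivBody_pos (hp : 1 ≤ p) (hf : ContDiff ℝ 1 f)
    (hsupp : HasCompactSupport f) (hne : f ≠ 0) : 0 < (volume (dirDerivBody n p f)).toReal :=
  ENNReal.toReal_pos
    (Measure.measure_pos_of_mem_nhds _ (dirDerivBody_mem_nhds_zero hp hf hsupp)).ne'
    (isCompact_dirDerivBody hp hf hsupp hne).measure_lt_top.ne

theorem mul_setIntegral_dirDerivBody [NeZero n] (hp : 1 ≤ p) (hf : ContDiff ℝ 1 f)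
    (hsupp : HasCompactSupport f) (hne : f ≠ 0) {g : EuclideanSpace ℝ (Fin n) → ℝ} {s : ℝ}
    (hs : 0 < n + s) (hg : Continuous g) (hg_smul : ∀ (r : ℝ) x, 0 < r → g (r • x) = r ^ s * g x) :
    (n + s) * ∫ y in dirDerivBody n p f, g y =
      ∫ ξ : Metric.sphere (0 : EuclideanSpace ℝ (Fin n)) 1,
        dirDerivLpNorm n p f ξ ^ (-(n + s)) * g ξ
          ∂(volume : Measure (EuclideanSpace ℝ (Fin n))).toSphere := by
  have hL := isCompact_dirDerivBody hp hf hsupp hne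
  rw [← finrank_euclideanSpace_fin (𝕜 := ℝ) (n := n)] at hs
  simpa only [finrank_euclideanSpace_fin, dirDerivBody] using
    mul_setIntegral_sublevel_eq_integral_toSphere hs (dirDerivLpNorm_smul_of_pos hp hf hsupp)
    (fun x hx => dirDerivLpNorm_pos hp hf hsupp hne (ne_zero_of_mem_unit_sphere ⟨x, hx⟩)) hg_smul
    hL.measurableSet (hg.continuousOn.integrableOn_compact hL)

theorem integral_dirDerivLpNorm_rpow_neg [NeZero n] (hp : 1 ≤ p) (hf : ContDiff ℝ 1 f)
    (hsupp : HasCompactSupport f) (hne : f ≠ 0) :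
    ∫ ξ : Metric.sphere (0 : EuclideanSpace ℝ (Fin n)) 1, dirDerivLpNorm n p f ξ ^ (-(n : ℝ))
        ∂(volume : Measure (EuclideanSpace ℝ (Fin n))).toSphere =
      n * (volume (dirDerivBody n p f)).toReal := by
  have hn : (0 : ℝ) < n + 0 := by simpa using NeZero.pos n
  simpa [Measure.real] using (mul_setIntegral_dirDerivBody hp hf hsupp hne hn
    (continuous_const (y := (1 : ℝ))) (fun r _ _ => by simp)).symm

theorem Cfstar_eq_mul_setIntegral [NeZero n] (hp : 1 ≤ p) (hf : ContDiff ℝ 1 f)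
    (hsupp : HasCompactSupport f) (hne : f ≠ 0) :
    Cfstar n p f = fun v => (n + p) * ∫ y in dirDerivBody n p f, |⟪v, y⟫| ^ p := by
  funext v
  refine (mul_setIntegral_dirDerivBody hp hf hsupp hne (g := fun y => |⟪v, y⟫| ^ p)
    (by positivity) ?_ fun r x hr => ?_).symm
  · exact (continuous_const.inner continuous_id).abs.rpow_const fun _ => Or.inr (by linarith)
  · rw [real_inner_smul_right, abs_mul, abs_of_pos hr, Real.mul_rpow hr.le (abs_nonneg _)]

theorem integral_Cfstar_gradient (hp : 1 ≤ p) (hf : ContDiff ℝ 1 f) (hsupp : HasCompactSupport f)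
    (hne : f ≠ 0) :
    ∫ x, Cfstar n p f (gradient f x) =
      ∫ ξ : Metric.sphere (0 : EuclideanSpace ℝ (Fin n)) 1, dirDerivLpNorm n p f ξ ^ (-(n : ℝ))
        ∂(volume : Measure (EuclideanSpace ℝ (Fin n))).toSphere := by
  have hp0 : 0 < p := by linarith
  have hpos (ξ : Metric.sphere (0 : EuclideanSpace ℝ (Fin n)) 1) : 0 < dirDerivLpNorm n p f ξ :=
    dirDerivLpNorm_pos hp hf hsupp hne (ne_zero_of_mem_unit_sphere ξ)
  let H : EuclideanSpace ℝ (Fin n) → Metric.sphere (0 : EuclideanSpace ℝ (Fin n)) 1 → ℝ :=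
    fun x ξ => dirDerivLpNorm n p f ξ ^ (-(n + p : ℝ)) * |⟪gradient f x, (ξ : _)⟫| ^ p
  have hH_cont : Continuous (Function.uncurry H) := by
    refine .mul ?_ ?_
    · exact ((continuous_dirDerivLpNorm hp hf hsupp).comp
        (continuous_subtype_val.comp continuous_snd)).rpow_const fun z => Or.inl (hpos z.2).ne'
    · exact (((continuous_gradient hf).comp continuous_fst).inner
        (continuous_subtype_val.comp continuous_snd)).abs.rpow_const fun z => Or.inr hp0.le
  have hH_supp : HasCompactSupport (Function.uncurry H) := by
    refine .intro ((hasCompactSupport_gradient hsupp).isCompact.prod isCompact_univ) fun z hz => ?_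
    have hgrad : gradient f z.1 = 0 :=
      image_eq_zero_of_notMem_tsupport fun h => hz ⟨h, Set.mem_univ _⟩
    simp only [H, Function.uncurry, hgrad, inner_zero_left, abs_zero, Real.zero_rpow hp0.ne',
      mul_zero]
  refine (integral_integral_swap (hH_cont.integrable_of_hasCompactSupport hH_supp)).trans
    (integral_congr_ae (.of_forall fun ξ => ?_))
  calc ∫ x, H x ξ
      = dirDerivLpNorm n p f ξ ^ (-(n + p : ℝ)) * ∫ x, |⟪gradient f x, (ξ : _)⟫| ^ p :=
        integral_const_mul _ _
    _ = dirDerivLpNorm n p f ξ ^ (-(n + p : ℝ)) * dirDerivLpNorm n p f ξ ^ p := by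
        rw [← lpInnerSeminorm_ofReal_rpow hp (memLp_gradient hf hsupp _),
          ← coe_dirDerivSeminorm hp hf hsupp, dirDerivSeminorm]
    _ = dirDerivLpNorm n p f ξ ^ (-(n : ℝ)) := by
        rw [← Real.rpow_add (hpos ξ), neg_add, neg_add_cancel_right]

theorem legendreBody_eq_smul_centroidBody [NeZero n] (hpq : p.HolderConjugate q)
    (hf : ContDiff ℝ 1 f) (hsupp : HasCompactSupport f) (hne : f ≠ 0) :
    legendreBody n p f =
      (q ^ (1 / q) *
        (p * ((n + p) * (aOne n p * (volume (dirDerivBody n p f)).toReal))) ^ (1 / p)) •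
        centroidBody n p (dirDerivBody n p f) := by
  have hp := hpq.lt.le
  rw [legendreBody, Cfstar_eq_mul_setIntegral hp hf hsupp hne]
  exact legendre_sublevel_eq_smul_centroidBody hpq (by positivity)
    (isCompact_dirDerivBody hp hf hsupp hne)
    (ENNReal.toReal_pos_iff.1 (toReal_volume_dirDerivBody_pos hp hf hsupp hne)).1.ne'

theorem volume_legendreBody_rpow_mul_integral_Cfstar_gradient [NeZero n]
    (hpq : p.HolderConjugate q) (hf : ContDiff ℝ 1 f) (hsupp : HasCompactSupport f)
    (hne : f ≠ 0) :
    (volume (legendreBody n p f)).toReal ^ (-(p / (n : ℝ))) *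
        ∫ x, Cfstar n p f (gradient f x) =
      q ^ (-(p / q)) * p⁻¹ * n / (aOne n p * (n + p)) *
        (volume (centroidBody n p (dirDerivBody n p f))).toReal ^ (-(p / (n : ℝ))) := by
  have hp := hpq.pos
  have hq := hpq.symm.pos
  have ha := aOne_pos n hpq.lt.le
  have hV := toReal_volume_dirDerivBody_pos hpq.lt.le hf hsupp hne
  rw [integral_Cfstar_gradient hpq.lt.le hf hsupp hne,
    integral_dirDerivLpNorm_rpow_neg hpq.lt.le hf hsupp hne,
    legendreBody_eq_smul_centroidBody hpq hf hsupp hne]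
  set V := (volume (dirDerivBody n p f)).toReal
  set b := p * ((n + p) * (aOne n p * V)) with hb
  have hb_pos : 0 < b := by positivity
  have hratio : (q ^ (1 / q) * b ^ (1 / p)) ^ (-p) = q ^ (-(p / q)) * b⁻¹ := by
    rw [Real.mul_rpow (by positivity) (by positivity), ← Real.rpow_mul hq.le,
      ← Real.rpow_mul hb_pos.le, ← Real.rpow_neg_one b]
    congr 2 <;> field_simp
  have hsmul := toReal_measure_smul_rpow (μ := volume) (r := q ^ (1 / q) * b ^ (1 / p))
    (by positivity) (centroidBody n p (dirDerivBody n p f)) p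
  rw [finrank_euclideanSpace_fin] at hsmul
  rw [hsmul, hratio, hb]
  field_simp

theorem natCast_rpow_mul_Zp_rpow [NeZero n] (hp : 1 ≤ p) (hf : ContDiff ℝ 1 f)
    (hsupp : HasCompactSupport f) (hne : f ≠ 0) :
    (n : ℝ) ^ (((n : ℝ) + p) / (n : ℝ)) * Zp n p f ^ p =
      n * (volume (dirDerivBody n p f)).toReal ^ (-(p / (n : ℝ))) := by
  have hn : (0 : ℝ) < n := Nat.cast_pos.2 (NeZero.pos n)
  have hV := toReal_volume_dirDerivBody_pos hp hf hsupp hne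
  have hexp : ((n : ℝ) + p) / n = 1 + p / n := by rw [add_div, div_self hn.ne']
  rw [Zp, integral_dirDerivLpNorm_rpow_neg hp hf hsupp hne, ← Real.rpow_mul (by positivity),
    neg_mul, one_div_mul_eq_div, Real.mul_rpow hn.le hV.le, hexp, Real.rpow_add hn, Real.rpow_one,
    mul_assoc, ← mul_assoc (_ ^ (p / (n : ℝ))), ← Real.rpow_add hn, add_neg_cancel,
    Real.rpow_zero, one_mul]

theorem key_equality_iff_volume_centroidBody_eq [NeZero n] (hpq : p.HolderConjugate q)
    (hf : ContDiff ℝ 1 f) (hsupp : HasCompactSupport f) (hne : f ≠ 0) :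
    (volume (legendreBody n p f)).toReal ^ (-(p / (n : ℝ))) *
        (∫ x, Cfstar n p f (gradient f x)) =
      (q ^ (-(p / q)) * p⁻¹) * (n : ℝ) ^ (((n : ℝ) + p) / (n : ℝ)) / (aOne n p * ((n : ℝ) + p)) *
        Zp n p f ^ p ↔
    (volume (centroidBody n p (dirDerivBody n p f))).toReal =
      (volume (dirDerivBody n p f)).toReal := by
  have hp := hpq.pos
  have hq := hpq.symm.pos
  have ha := aOne_pos n hpq.lt.le
  have hn : (0 : ℝ) < n := Nat.cast_pos.2 (NeZero.pos n)
  have hrhs : q ^ (-(p / q)) * p⁻¹ * (n : ℝ) ^ (((n : ℝ) + p) / (n : ℝ)) /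
        (aOne n p * ((n : ℝ) + p)) * Zp n p f ^ p =
      q ^ (-(p / q)) * p⁻¹ * n / (aOne n p * (n + p)) *
        (volume (dirDerivBody n p f)).toReal ^ (-(p / (n : ℝ))) := by
    linear_combination q ^ (-(p / q)) * p⁻¹ / (aOne n p * (n + p)) *
      natCast_rpow_mul_Zp_rpow hpq.lt.le hf hsupp hne
  rw [volume_legendreBody_rpow_mul_integral_Cfstar_gradient hpq hf hsupp hne, hrhs,
    mul_right_inj' (by positivity)]
  exact (Real.rpow_left_injOn (neg_ne_zero.2 (by positivity))).eq_iff ENNReal.toReal_nonneg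
    ENNReal.toReal_nonneg

end KeyInequality

theorem key_inequality_equality_case_general (n : ℕ) (hn : 1 ≤ n) (p q : ℝ) (hp : 1 < p)
    (hpq : 1 / p + 1 / q = 1) (f : EuclideanSpace ℝ (Fin n) → ℝ) (hf : ContDiff ℝ 1 f)
    (hsupp : HasCompactSupport f) (hne : f ≠ 0)
    (hBPeq : ∀ K : Set (EuclideanSpace ℝ (Fin n)), IsCompact K → Convex ℝ K →
      (0 : EuclideanSpace ℝ (Fin n)) ∈ interior K →
      (volume (centroidBody n p K)).toReal = (volume K).toReal →
      ∃ A : EuclideanSpace ℝ (Fin n) ≃ₗ[ℝ] EuclideanSpace ℝ (Fin n),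
        K = A '' Metric.closedBall (0 : EuclideanSpace ℝ (Fin n)) 1)
    (heq : (volume {x : EuclideanSpace ℝ (Fin n) | legendre (Cfstar n p f) x ≤ 1}).toReal
        ^ (-(p / (n : ℝ))) * (∫ x, Cfstar n p f (gradient f x)) =
      (q ^ (-(p / q)) * p⁻¹) * (n : ℝ) ^ (((n : ℝ) + p) / (n : ℝ)) / (aOne n p * ((n : ℝ) + p)) *
        Zp n p f ^ p) :
    ∃ A : EuclideanSpace ℝ (Fin n) ≃ₗ[ℝ] EuclideanSpace ℝ (Fin n),
      {ξ : EuclideanSpace ℝ (Fin n) | dirDerivLpNorm n p f ξ ≤ 1} =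
        A '' Metric.closedBall (0 : EuclideanSpace ℝ (Fin n)) 1 := by
  have : NeZero n := ⟨by omega⟩
  have hconj : p.HolderConjugate q := Real.holderConjugate_iff.2 ⟨hp, by simpa using hpq⟩
  exact hBPeq (dirDerivBody n p f) (isCompact_dirDerivBody hp.le hf hsupp hne)
    (convex_dirDerivBody hp.le hf hsupp)
    (mem_interior_iff_mem_nhds.2 (dirDerivBody_mem_nhds_zero hp.le hf hsupp))
    ((key_equality_iff_volume_centroidBody_eq hconj hf hsupp hne).1 heq)

/-- Equality case: if equality holds in the key inequality, then (using the equality case of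
the `L_p` Busemann-Petty centroid inequality) the body `L_f` is a `0`-symmetric ellipsoid. -/
theorem key_inequality_equality_case (n : ℕ) (hn : 1 ≤ n) (p q : ℝ) (hp : 1 < p)
    (hpq : 1 / p + 1 / q = 1) (f : EuclideanSpace ℝ (Fin n) → ℝ) (hf : ContDiff ℝ (⊤ : ℕ∞) f)
    (hsupp : HasCompactSupport f) (hne : f ≠ 0)
    (hBPeq : ∀ K : Set (EuclideanSpace ℝ (Fin n)), IsCompact K → Convex ℝ K →
      (0 : EuclideanSpace ℝ (Fin n)) ∈ interior K →
      (volume (centroidBody n p K)).toReal = (volume K).toReal →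
      ∃ A : EuclideanSpace ℝ (Fin n) ≃ₗ[ℝ] EuclideanSpace ℝ (Fin n),
        K = A '' Metric.closedBall (0 : EuclideanSpace ℝ (Fin n)) 1)
    (heq : (volume {x : EuclideanSpace ℝ (Fin n) | legendre (Cfstar n p f) x ≤ 1}).toReal
        ^ (-(p / (n : ℝ))) * (∫ x, Cfstar n p f (gradient f x)) =
      (q ^ (-(p / q)) * p⁻¹) * (n : ℝ) ^ (((n : ℝ) + p) / (n : ℝ)) / (aOne n p * ((n : ℝ) + p)) *
        Zp n p f ^ p) :
    ∃ A : EuclideanSpace ℝ (Fin n) ≃ₗ[ℝ] EuclideanSpace ℝ (Fin n),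
      {ξ : EuclideanSpace ℝ (Fin n) | dirDerivLpNorm n p f ξ ≤ 1} =
        A '' Metric.closedBall (0 : EuclideanSpace ℝ (Fin n)) 1 := by
  exact key_inequality_equality_case_general n hn p q hp hpq f
    (hf.of_le (mod_cast le_top)) hsupp hne hBPeq heq
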